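/- Let a ∈ (−1,1). For y₁ ≥ 0, y > 0, t > 0, define the Bessel heat kernel with Neumann condition p^{(a)}(y₁,y,t) = (2t)^{−(1+a)/2} e^{−(y₁²+y²)/(4t)} Σ_{k=0}^∞ [2^{(1−a)/2} (y₁ y/(4t))^{2k}] / [k! Γ(k + (a+1)/2)]. Then for every fixed y₁ ≥ 0, the function (y,t) ↦ p^{(a)}(y₁,y,t) satisfies the Bessel heat equation ∂_t p^{(a)} = ∂_{yy} p^{(a)} + (a/y) ∂_y p^{(a)} for all y > 0 and t > 0. -/

import Mathlib

/-!
With `b = (a+1)/2`, the kernel is a constant multiple of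
`(2t)^(-b) * exp (-(y₁² + y²)/(4t)) * F b (w)`, where `w = (y₁ y/(4t))²` and
`F b w = ∑ w^k / (k! Γ(k+b))` (`besselSeries`) is the Bessel series with parameter `b`.
The termwise derivative of `F b` is `F (b+1)` (`hasDerivAt_besselSeries`), and
`Γ(k+b+1) = (k+b) Γ(k+b)` gives the contiguity relation
`F b w = b F (b+1) w + w F (b+2) w` (`besselSeries_eq`), which is Bessel's equation
`w F'' + b F' = F`. Computing the `t`-derivative and the first two `y`-derivatives of the
product, the heat equation becomes exactly `y₁²/(4t²)` times this relation.
-/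

/-- The Bessel heat kernel with Neumann condition
`p^{(a)}(y₁,y,t) = (2t)^{-(1+a)/2} e^{-(y₁²+y²)/(4t)}
  Σ_{k} 2^{(1-a)/2} (y₁y/(4t))^{2k} / (k! Γ(k+(a+1)/2))`. -/
noncomputable def besselHeatKernel (a y₁ y t : ℝ) : ℝ :=
  (2 * t) ^ (-(1 + a) / 2) * Real.exp (-(y₁ ^ 2 + y ^ 2) / (4 * t)) *
    ∑' k : ℕ, (2 : ℝ) ^ ((1 - a) / 2) * (y₁ * y / (4 * t)) ^ (2 * k) /
      (k.factorial * Real.Gamma ((k : ℝ) + (a + 1) / 2))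

/-- The entire function `w ↦ ∑ w^k / (k! Γ(k+b))`, so that
`I_ν(x) = (x/2)^ν * besselSeries (ν+1) ((x/2)^2)`. -/
noncomputable def besselSeries (b w : ℝ) : ℝ :=
  ∑' k : ℕ, w ^ k / (k.factorial * Real.Gamma ((k : ℝ) + b))

/-- `Γ(k+b)` is bounded below since it is nondecreasing in `k` from `k = 1` on. -/
lemma exists_inv_Gamma_le {b : ℝ} (hb : 0 < b) :
    ∃ M : ℝ, 0 < M ∧ ∀ k : ℕ, (Real.Gamma ((k : ℝ) + b))⁻¹ ≤ M := by
  have h0 := Real.Gamma_pos_of_pos hb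
  have h1 := Real.Gamma_pos_of_pos (show 0 < 1 + b by linarith)
  have hm : 0 < min (Real.Gamma b) (Real.Gamma (1 + b)) := lt_min h0 h1
  refine ⟨(min (Real.Gamma b) (Real.Gamma (1 + b)))⁻¹, inv_pos.2 hm, fun k => ?_⟩
  apply inv_anti₀ hm
  cases k with
  | zero => simp
  | succ k =>
    refine (min_le_right _ _).trans ?_
    induction k with
    | zero => simp
    | succ k ih =>
      have hk : (0 : ℝ) ≤ k := Nat.cast_nonneg k
      push_cast at ih ⊢
      rw [show (k : ℝ) + 1 + 1 + b = (k + 1 + b) + 1 by ring,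
        Real.Gamma_add_one (by positivity)]
      have hpos := Real.Gamma_pos_of_pos (show 0 < (k : ℝ) + 1 + b by positivity)
      nlinarith

lemma summable_besselSeries {b : ℝ} (hb : 0 < b) (w : ℝ) :
    Summable fun k : ℕ => w ^ k / (k.factorial * Real.Gamma ((k : ℝ) + b)) := by
  obtain ⟨M, hM, h⟩ := exists_inv_Gamma_le hb
  refine Summable.of_norm_bounded ((Real.summable_pow_div_factorial |w|).mul_right M) fun k => ?_
  have hG := Real.Gamma_pos_of_pos (show 0 < (k : ℝ) + b by positivity)
  rw [← div_div, div_eq_mul_inv _ (Real.Gamma _), norm_mul, norm_div, norm_pow,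
    Real.norm_of_nonneg (inv_pos.2 hG).le, Real.norm_natCast, Real.norm_eq_abs]
  gcongr
  exact h k

/-- Termwise differentiation shifts the parameter by one. -/
lemma hasDerivAt_besselSeries {b : ℝ} (hb : 0 < b) (w : ℝ) :
    HasDerivAt (besselSeries b) (besselSeries (b + 1) w) w := by
  obtain ⟨M, hM, h⟩ := exists_inv_Gamma_le hb
  set R : ℝ := |w| + 1
  have hu : Summable fun k : ℕ => ((k : ℝ) * R ^ (k - 1) / k.factorial) * M := by
    refine Summable.mul_right M ?_
    rw [← summable_nat_add_iff 1]
    refine (Real.summable_pow_div_factorial R).congr fun k => ?_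
    rw [Nat.factorial_succ]
    push_cast
    field_simp
  have key := hasDerivAt_tsum_of_isPreconnected
    (g := fun (k : ℕ) (x : ℝ) => x ^ k / (k.factorial * Real.Gamma ((k : ℝ) + b)))
    (g' := fun (k : ℕ) (x : ℝ) =>
      ((k : ℝ) * x ^ (k - 1)) / (k.factorial * Real.Gamma ((k : ℝ) + b)))
    (t := Metric.ball (0 : ℝ) R) (y₀ := w) (y := w) hu Metric.isOpen_ball
    (convex_ball (0 : ℝ) R).isPreconnected
    (fun k x _ => (hasDerivAt_pow k x).div_const _)
    (fun k x hx => ?_) (by simp [R]) (summable_besselSeries hb w) (by simp [R])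
  · have hsum : besselSeries (b + 1) w = ∑' k : ℕ,
        ((k : ℝ) * w ^ (k - 1)) / (k.factorial * Real.Gamma ((k : ℝ) + b)) := by
      have hterm : ∀ k : ℕ, (((k + 1 : ℕ) : ℝ) * w ^ (k + 1 - 1)) /
          ((k + 1).factorial * Real.Gamma (((k + 1 : ℕ) : ℝ) + b))
          = w ^ k / (k.factorial * Real.Gamma ((k : ℝ) + (b + 1))) := fun k => by
        rw [Nat.factorial_succ, Nat.add_sub_cancel]
        push_cast
        rw [show (k : ℝ) + 1 + b = k + (b + 1) by ring]
        have hG := Real.Gamma_pos_of_pos (show 0 < (k : ℝ) + (b + 1) by positivity)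
        field_simp
      -- The `k = 0` term of the differentiated series vanishes.
      rw [Summable.tsum_eq_zero_add]
      · simp only [hterm]
        simp [besselSeries]
      · rw [← summable_nat_add_iff 1]
        exact (summable_besselSeries (by linarith : 0 < b + 1) w).congr fun k => (hterm k).symm
    rw [hsum]
    exact key
  · have hG := Real.Gamma_pos_of_pos (show 0 < (k : ℝ) + b by positivity)
    have hx' : |x| ≤ R := by simpa using (Metric.mem_ball.1 hx).le
    rw [← div_div, div_eq_mul_inv _ (Real.Gamma _), norm_mul, norm_div, norm_mul, norm_pow,
      Real.norm_of_nonneg (inv_pos.2 hG).le, Real.norm_natCast, Real.norm_natCast,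
      Real.norm_eq_abs]
    gcongr
    exact h k

/-- The contiguity relation, which is Bessel's equation `w F'' + b F' = F`
for `F = besselSeries b`. -/
lemma besselSeries_eq {b : ℝ} (hb : 0 < b) (w : ℝ) :
    besselSeries b w = b * besselSeries (b + 1) w + w * besselSeries (b + 2) w := by
  have s1 := summable_besselSeries (by linarith : 0 < b + 1) w
  have s2 := summable_besselSeries (by linarith : 0 < b + 2) w
  -- Shift the last series so that it is indexed by the power of `w`.
  have hterm : ∀ k : ℕ, (((k + 1 : ℕ) : ℝ) * w ^ (k + 1)) /
      ((k + 1).factorial * Real.Gamma (((k + 1 : ℕ) : ℝ) + (b + 1)))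
      = w * (w ^ k / (k.factorial * Real.Gamma ((k : ℝ) + (b + 2)))) := fun k => by
    rw [Nat.factorial_succ]
    push_cast
    rw [show (k : ℝ) + 1 + (b + 1) = k + (b + 2) by ring]
    have hG := Real.Gamma_pos_of_pos (show 0 < (k : ℝ) + (b + 2) by positivity)
    field_simp
    ring
  have s3 : Summable fun k : ℕ =>
      ((k : ℝ) * w ^ k) / (k.factorial * Real.Gamma ((k : ℝ) + (b + 1))) := by
    rw [← summable_nat_add_iff 1]
    exact (s2.mul_left w).congr fun k => (hterm k).symm
  have e3 : w * besselSeries (b + 2) w = ∑' k : ℕ,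
      ((k : ℝ) * w ^ k) / (k.factorial * Real.Gamma ((k : ℝ) + (b + 1))) := by
    rw [s3.tsum_eq_zero_add]
    simp only [hterm]
    simp [besselSeries, tsum_mul_left]
  rw [e3, besselSeries, besselSeries, ← tsum_mul_left, ← (s1.mul_left b).tsum_add s3]
  refine tsum_congr fun k => ?_
  rw [← add_assoc, Real.Gamma_add_one (by positivity)]
  have hG := Real.Gamma_pos_of_pos (show 0 < (k : ℝ) + b by positivity)
  field_simp
  ring

lemma besselHeatKernel_eq (a y₁ y t : ℝ) :
    besselHeatKernel a y₁ y t = (2 * t) ^ (-(1 + a) / 2) *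
      Real.exp (-(y₁ ^ 2 + y ^ 2) / (4 * t)) *
      ((2 : ℝ) ^ ((1 - a) / 2) * besselSeries ((a + 1) / 2) ((y₁ * y / (4 * t)) ^ 2)) := by
  rw [besselHeatKernel, besselSeries, ← tsum_mul_left (a := (2 : ℝ) ^ ((1 - a) / 2))]
  congr 1
  exact tsum_congr fun k => by rw [pow_mul, mul_div_assoc]

/-- for fixed `y₁ ≥ 0`, the kernel `p^{(a)}(y₁,·,·)` satisfies the Bessel heat
equation `∂_t p^{(a)} = ∂_{yy} p^{(a)} + (a/y) ∂_y p^{(a)}` for `y > 0`, `t > 0`. -/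
theorem besselHeatKernel_solves_bessel_heat_equation
    (a : ℝ) (ha : a ∈ Set.Ioo (-1 : ℝ) 1) (y₁ : ℝ) (hy₁ : 0 ≤ y₁) :
    ∀ y t : ℝ, 0 < y → 0 < t →
      deriv (fun t' => besselHeatKernel a y₁ y t') t
        = deriv (deriv (fun y' => besselHeatKernel a y₁ y' t)) y
          + (a / y) * deriv (fun y' => besselHeatKernel a y₁ y' t) y := by
  intro y t hy ht
  have hb : 0 < (a + 1) / 2 := by linarith [ha.1]
  simp only [besselHeatKernel_eq]
  set b := (a + 1) / 2 with hbdef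
  have hab : a = 2 * b - 1 := by rw [hbdef]; ring
  set C : ℝ := (2 : ℝ) ^ ((1 - a) / 2)
  set T : ℝ := (2 * t) ^ (-(1 + a) / 2) with hT
  -- Spatial derivatives of the three factors.
  have hE : ∀ x : ℝ, HasDerivAt (fun x' => Real.exp (-(y₁ ^ 2 + x' ^ 2) / (4 * t)))
      (Real.exp (-(y₁ ^ 2 + x ^ 2) / (4 * t)) * (-x / (2 * t))) x := fun x => by
    have h := ((((hasDerivAt_pow 2 x).const_add (y₁ ^ 2)).fun_neg.div_const (4 * t))).exp
    refine h.congr_deriv ?_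
    push_cast
    field_simp
    ring
  have hw : ∀ x : ℝ, HasDerivAt (fun x' => (y₁ * x' / (4 * t)) ^ 2)
      (y₁ ^ 2 * x / (8 * t ^ 2)) x := fun x => by
    have h := (((hasDerivAt_id x).const_mul y₁).div_const (4 * t)).fun_pow 2
    refine h.congr_deriv ?_
    simp only [id]
    push_cast
    field_simp
    ring
  have hF : ∀ c : ℝ, 0 < c → ∀ x : ℝ,
      HasDerivAt (fun x' => besselSeries c ((y₁ * x' / (4 * t)) ^ 2))
      (besselSeries (c + 1) ((y₁ * x / (4 * t)) ^ 2) * (y₁ ^ 2 * x / (8 * t ^ 2))) x :=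
    fun c hc x => (hasDerivAt_besselSeries hc _).comp x (hw x)
  have hD1 : ∀ x : ℝ, HasDerivAt (fun x' => T * Real.exp (-(y₁ ^ 2 + x' ^ 2) / (4 * t)) *
      (C * besselSeries b ((y₁ * x' / (4 * t)) ^ 2)))
      (T * Real.exp (-(y₁ ^ 2 + x ^ 2) / (4 * t)) *
        (C * (besselSeries b ((y₁ * x / (4 * t)) ^ 2) * (-x / (2 * t)) +
          besselSeries (b + 1) ((y₁ * x / (4 * t)) ^ 2) * (y₁ ^ 2 * x / (8 * t ^ 2))))) x :=
    fun x => by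
      refine (((hE x).const_mul T).mul ((hF b hb x).const_mul C)).congr_deriv ?_
      ring
  have hlin1 : HasDerivAt (fun x : ℝ => -x / (2 * t)) (-1 / (2 * t)) y :=
    (hasDerivAt_id y).neg.div_const _
  have hlin2 : HasDerivAt (fun x : ℝ => y₁ ^ 2 * x / (8 * t ^ 2))
      (y₁ ^ 2 * 1 / (8 * t ^ 2)) y :=
    ((hasDerivAt_id y).const_mul _).div_const _
  have hD2 := ((hE y).const_mul T).fun_mul
    ((((hF b hb y).fun_mul hlin1).fun_add ((hF (b + 1) (by linarith) y).fun_mul hlin2)).const_mul C)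
  -- Time derivatives of the three factors.
  have hTt : HasDerivAt (fun t' : ℝ => (2 * t') ^ (-(1 + a) / 2)) (T * (-b / t)) t := by
    have h := ((hasDerivAt_id t).const_mul 2).rpow_const (p := -(1 + a) / 2)
      (Or.inl (by simp only [id]; positivity))
    refine h.congr_deriv ?_
    simp only [id]
    rw [Real.rpow_sub_one (by positivity), ← hT, hab]
    field_simp
    ring
  have hEt : HasDerivAt (fun t' : ℝ => Real.exp (-(y₁ ^ 2 + y ^ 2) / (4 * t')))
      (Real.exp (-(y₁ ^ 2 + y ^ 2) / (4 * t)) * ((y₁ ^ 2 + y ^ 2) / (4 * t ^ 2))) t := by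
    have h := ((hasDerivAt_const t (-(y₁ ^ 2 + y ^ 2))).fun_div
      ((hasDerivAt_id t).const_mul 4) (by simp only [id]; positivity)).exp
    refine h.congr_deriv ?_
    simp only [id]
    field_simp
    ring
  have hwt : HasDerivAt (fun t' : ℝ => (y₁ * y / (4 * t')) ^ 2)
      (-2 * (y₁ * y / (4 * t)) ^ 2 / t) t := by
    have h := ((hasDerivAt_const t (y₁ * y)).fun_div
      ((hasDerivAt_id t).const_mul 4) (by simp only [id]; positivity)).fun_pow 2
    refine h.congr_deriv ?_
    simp only [id]
    push_cast
    field_simp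
    ring
  have hFt : HasDerivAt (fun t' => besselSeries b ((y₁ * y / (4 * t')) ^ 2))
      (besselSeries (b + 1) ((y₁ * y / (4 * t)) ^ 2) *
        (-2 * (y₁ * y / (4 * t)) ^ 2 / t)) t :=
    (hasDerivAt_besselSeries hb _).comp t hwt
  have hDt := (hTt.fun_mul hEt).fun_mul (hFt.const_mul C)
  have hd1 : deriv (fun x' => T * Real.exp (-(y₁ ^ 2 + x' ^ 2) / (4 * t)) *
      (C * besselSeries b ((y₁ * x' / (4 * t)) ^ 2))) = _ := funext fun x => (hD1 x).deriv
  have e1 := hDt.deriv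
  have e2 := hD2.deriv
  rw [hd1, e1, e2]
  beta_reduce
  rw [← hT]
  have hode := besselSeries_eq hb ((y₁ * y / (4 * t)) ^ 2)
  rw [show b + 1 + 1 = b + 2 by ring]
  clear_value T
  clear hD1 hD2 hDt hE hF hFt hTt hEt hd1 e1 e2 hT
  generalize Real.exp (-(y₁ ^ 2 + y ^ 2) / (4 * t)) = E
  generalize besselSeries (b + 2) ((y₁ * y / (4 * t)) ^ 2) = F2 at hode ⊢
  generalize besselSeries (b + 1) ((y₁ * y / (4 * t)) ^ 2) = F1 at hode ⊢
  generalize besselSeries b ((y₁ * y / (4 * t)) ^ 2) = F0 at hode ⊢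
  rw [hode, hab]
  field_simp
  ring
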